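/- In the GJR-COGARCH method-of-moments setting (Δ, S > 0; θ, η, φ > 0; γ ∈ [0,1); γ̃ = 1 + γ²; H = γ̃² + 4γ̃ − 4; p = η − φγ̃ > 0; q = 2p − φ²HS > 0; μ = θΔ/p; E = (1 − e^{−Δp})(e^{Δp} − 1); Γ, k, M₁ as defined), the parameter φ satisfies the quadratic equation φ²γ̃M₁ + 2φpM₁ − 2kΓp³Δ/(H·E) = 0; moreover, with M₄ := p²/γ̃² + 2ΔkΓp³/(γ̃M₁EH), one has M₄ > 0, √M₄ > p/γ̃, and φ = −p/γ̃ + √M₄. -/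

import Mathlib

/-- In the GJR-COGARCH method-of-moments setting, `φ` satisfies the quadratic equation
`φ²γ̃M₁ + 2φpM₁ − 2kΓp³Δ/(HE) = 0`; moreover, with
`M₄ = p²/γ̃² + 2ΔkΓp³/(γ̃M₁EH)`, one has `M₄ > 0`, `√M₄ > p/γ̃` and
`φ = −p/γ̃ + √M₄`. -/
theorem mom_phi_quadratic
    (Δ S θ η φ γ γt H p q μ E Γ k : ℝ)
    (hΔ : 0 < Δ) (hS : 0 < S) (hθ : 0 < θ) (hη : 0 < η) (hφ : 0 < φ)
    (hγ : γ ∈ Set.Ico (0 : ℝ) 1)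
    (hγt : γt = 1 + γ ^ 2) (hH : H = γt ^ 2 + 4 * γt - 4)
    (hp : p = η - φ * γt) (hp0 : 0 < p)
    (hq : q = 2 * p - φ ^ 2 * H * S) (hq0 : 0 < q)
    (hμ : μ = θ * Δ / p)
    (hE : E = (1 - Real.exp (-Δ * p)) * (Real.exp (Δ * p) - 1))
    (hΓ : Γ = 6 * (θ ^ 2 / p ^ 2) * (2 * η / φ - γt) * (2 / q - 1 / p)
            * (Δ - (1 - Real.exp (-Δ * p)) / p)
          + 2 * (θ ^ 2 / φ ^ 2) * (2 / q - 1 / p) * H⁻¹ * Δ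
          + 2 * (θ ^ 2 / p ^ 2) * Δ ^ 2)
    (hk : k = (θ ^ 2 / (Γ * p ^ 3)) * (2 * η / φ - γt) * (2 / q - 1 / p) * E)
    (M₁ M₄ : ℝ)
    (hM1 : M₁ = Γ - (6 * k * Γ / E) * (p * Δ - 1 + Real.exp (-Δ * p)) - 2 * μ ^ 2)
    (hM4 : M₄ = p ^ 2 / γt ^ 2 + 2 * Δ * k * Γ * p ^ 3 / (γt * M₁ * E * H)) :
    φ ^ 2 * γt * M₁ + 2 * φ * p * M₁ - 2 * k * Γ * p ^ 3 * Δ / (H * E) = 0 ∧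
    0 < M₄ ∧ p / γt < Real.sqrt M₄ ∧ φ = -p / γt + Real.sqrt M₄ := by
  have hγt0 : 0 < γt := by rw [hγt]; positivity
  have hH0 : 0 < H := by
    have : H = 1 + 6 * γ ^ 2 + γ ^ 4 := by rw [hH, hγt]; ring
    rw [this]; positivity
  have hA : 0 < 2 / q - 1 / p := by
    have hqp : q < 2 * p := by
      have : 0 < φ ^ 2 * H * S := by positivity
      linarith
    rw [sub_pos, div_lt_div_iff₀ hp0 hq0]
    linarith
  have hB : 2 * η / φ - γt = (2 * p + φ * γt) / φ := by
    rw [hp]; field_simp; ring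
  have hE0 : 0 < E := by
    have hΔp : 0 < Δ * p := mul_pos hΔ hp0
    rw [hE]
    refine mul_pos (sub_pos.2 (Real.exp_lt_one_iff.2 (by linarith))) (sub_pos.2 ?_)
    exact Real.one_lt_exp_iff.2 hΔp
  have hD : 0 ≤ Δ - (1 - Real.exp (-Δ * p)) / p := by
    rw [sub_nonneg, div_le_iff₀ hp0]
    linarith [Real.add_one_le_exp (-Δ * p)]
  generalize Real.exp (-Δ * p) = e at *
  generalize 2 / q - 1 / p = A at *
  rw [hB] at hΓ hk
  have hΓ0 : 0 < Γ := by rw [hΓ]; positivity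
  have hK : k * Γ = θ ^ 2 / p ^ 3 * ((2 * p + φ * γt) / φ) * A * E := by
    rw [hk]; field_simp
  have hM : M₁ = 2 * (θ ^ 2 / φ ^ 2) * A * H⁻¹ * Δ := by
    rw [hM1, mul_assoc 6 k Γ, hK, hΓ, hμ]
    field_simp
    ring
  have hM0 : 0 < M₁ := by rw [hM]; positivity
  have hquad : 2 * k * Γ * p ^ 3 * Δ / (H * E) = M₁ * φ * (2 * p + φ * γt) := by
    rw [mul_assoc 2 k Γ, hK, hM]
    field_simp
  have hsq : M₄ = (φ + p / γt) ^ 2 := by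
    have : 2 * Δ * k * Γ * p ^ 3 / (γt * M₁ * E * H)
        = 2 * k * Γ * p ^ 3 * Δ / (H * E) / (γt * M₁) := by
      field_simp
    rw [hM4, this, hquad]
    field_simp
    ring
  have hroot : Real.sqrt M₄ = φ + p / γt := by
    rw [hsq, Real.sqrt_sq (by positivity)]
  refine ⟨by rw [hquad]; ring, by rw [hsq]; positivity, by rw [hroot]; linarith, ?_⟩
  rw [hroot]; ring
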